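/- arXiv:0807.4536 — 4 statements merged into one kernel-verified Lean document; each statement's English description precedes it below -/
import Mathlib

section
/- For every integer k ≥ 0 and every real vector n = (n_1, n_2, n_3) ∈ ℝ³ with ‖n‖₂ ≤ 1, the (k+2)×(k+2) matrix ((k+1)/2)·I + n_1·J_x + n_2·J_y + n_3·J_z (with J_x, J_y, J_z the spin matrices of dimension d = k+2) is Hermitian and positive semidefinite. -/
open Matrix ComplexOrder

/-- The diagonal spin matrix `J_z` of dimension `d`, with `(J_z)_{m,m} = m - (d-1)/2`. -/
noncomputable def Jz (d : ℕ) : Matrix (Fin d) (Fin d) ℂ :=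
  Matrix.diagonal (fun m => (((m : ℝ) - ((d : ℝ) - 1) / 2 : ℝ) : ℂ))

/-- The raising operator `J_+` of dimension `d`, with `(J_+)_{m,m-1} = √(m(d-m))`. -/
noncomputable def Jplus (d : ℕ) : Matrix (Fin d) (Fin d) ℂ :=
  fun m m' => if (m : ℕ) = (m' : ℕ) + 1
    then ((Real.sqrt ((m : ℝ) * ((d : ℝ) - (m : ℝ))) : ℝ) : ℂ) else 0

/-- The lowering operator `J_- = (J_+)†`. -/
noncomputable def Jminus (d : ℕ) : Matrix (Fin d) (Fin d) ℂ := (Jplus d)ᴴ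

/-- `J_x = (J_+ + J_-)/2`. -/
noncomputable def Jx (d : ℕ) : Matrix (Fin d) (Fin d) ℂ :=
  (1 / 2 : ℂ) • (Jplus d + Jminus d)

/-- `J_y = (J_+ - J_-)/(2i)`. -/
noncomputable def Jy (d : ℕ) : Matrix (Fin d) (Fin d) ℂ :=
  (1 / (2 * Complex.I) : ℂ) • (Jplus d - Jminus d)


noncomputable def auxP (k : ℕ) : Matrix (Fin (k + 1)) (Fin (k + 2)) ℂ :=
  fun j m => if m = j.succ then ((Real.sqrt (m : ℝ) : ℝ) : ℂ) else 0

noncomputable def auxQ (k : ℕ) : Matrix (Fin (k + 1)) (Fin (k + 2)) ℂ :=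
  fun j m => if m = j.castSucc then ((Real.sqrt ((k : ℝ) + 1 - (m : ℝ)) : ℝ) : ℂ) else 0

lemma aux_sq (x : ℝ) (hx : 0 ≤ x) : ((Real.sqrt x : ℝ) : ℂ) * ((Real.sqrt x : ℝ) : ℂ) = (x : ℂ) := by
  rw [← Complex.ofReal_mul, Real.mul_self_sqrt hx]

lemma auxPP (k : ℕ) : (auxP k)ᴴ * auxP k =
    Matrix.diagonal (fun m : Fin (k + 2) => (((m : ℕ) : ℝ) : ℂ)) := by
  ext m m'
  rw [Matrix.mul_apply, Matrix.diagonal_apply]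
  simp only [Matrix.conjTranspose_apply, auxP]
  refine Fin.cases ?_ (fun i => ?_) m
  · rw [Finset.sum_eq_zero]
    · split_ifs <;> simp
    · intro j _
      rw [if_neg (Fin.succ_ne_zero j).symm]; simp
  · rw [Finset.sum_eq_single i]
    · by_cases h : m' = i.succ
      · subst h
        simp only [if_true, Complex.star_def, Complex.conj_ofReal]
        exact aux_sq _ (by positivity)
      · simp [h, Ne.symm h]
    · intro j _ hj
      rw [if_neg (fun h => hj (Fin.succ_injective _ h).symm)]; simp
    · simp

lemma auxQQ (k : ℕ) : (auxQ k)ᴴ * auxQ k =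
    Matrix.diagonal (fun m : Fin (k + 2) => (((k : ℝ) + 1 - ((m : ℕ) : ℝ) : ℝ) : ℂ)) := by
  ext m m'
  rw [Matrix.mul_apply, Matrix.diagonal_apply]
  simp only [Matrix.conjTranspose_apply, auxQ]
  refine Fin.lastCases ?_ (fun i => ?_) m
  · rw [Finset.sum_eq_zero]
    · split_ifs <;> simp
    · intro j _
      rw [if_neg (Fin.castSucc_lt_last j).ne']; simp
  · rw [Finset.sum_eq_single i]
    · by_cases h : m' = i.castSucc
      · subst h
        simp only [if_true, Complex.star_def, Complex.conj_ofReal]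
        refine aux_sq _ ?_
        have : ((i : ℕ) : ℝ) ≤ (k : ℝ) := by exact_mod_cast Nat.lt_succ_iff.mp i.2
        simp only [Fin.val_castSucc]
        linarith
      · simp [h, Ne.symm h]
    · intro j _ hj
      rw [if_neg (fun h => hj (Fin.castSucc_injective _ h).symm)]; simp
    · simp

lemma auxPQ (k : ℕ) : (auxP k)ᴴ * auxQ k = Jplus (k + 2) := by
  ext m m'
  rw [Matrix.mul_apply]
  simp only [Matrix.conjTranspose_apply, auxQ, auxP, Jplus]
  refine Fin.cases ?_ (fun i => ?_) m
  · rw [Finset.sum_eq_zero]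
    · simp
    · intro j _
      rw [if_neg (Fin.succ_ne_zero j).symm]; simp
  · rw [Finset.sum_eq_single i]
    · by_cases h : m' = i.castSucc
      · subst h
        simp only [if_true, Complex.star_def, Complex.conj_ofReal, Fin.val_castSucc, Fin.val_succ]
        rw [← Complex.ofReal_mul, ← Real.sqrt_mul (by positivity)]
        congr 3
        push_cast
        ring
      · have h2 : ¬ ((i.succ : Fin (k+2)) : ℕ) = (m' : ℕ) + 1 := by
          intro h3
          apply h
          ext
          simp at h3 ⊢
          omega
        rw [if_neg h, if_neg h2]; simp
    · intro j _ hj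
      rw [if_neg (fun h => hj (Fin.succ_injective _ h).symm)]; simp
    · simp

lemma auxQP (k : ℕ) : (auxQ k)ᴴ * auxP k = Jminus (k + 2) := by
  rw [Jminus, ← auxPQ, Matrix.conjTranspose_mul, Matrix.conjTranspose_conjTranspose]

lemma aux_smul_psd {n m : ℕ} (A : Matrix (Fin n) (Fin m) ℂ) (r : ℝ) (hr : 0 ≤ r) :
    ((r : ℂ) • (Aᴴ * A)).PosSemidef :=
  (Matrix.posSemidef_conjTranspose_mul_self A).smul (by exact_mod_cast hr)

lemma aux_psd {n m : ℕ} (P Q : Matrix (Fin n) (Fin m) ℂ) (a b : ℝ) (c : ℂ) (ha : 0 ≤ a)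
    (hb : 0 ≤ b) (hc : Complex.normSq c ≤ a * b) :
    ((a : ℂ) • (Pᴴ * P) + (b : ℂ) • (Qᴴ * Q) + c • (Pᴴ * Q) + (star c) • (Qᴴ * P)).PosSemidef := by
  rcases ha.eq_or_lt with h | h
  · subst h
    have : c = 0 := by
      rw [← Complex.normSq_eq_zero]
      have := Complex.normSq_nonneg c
      linarith
    subst this
    simpa using aux_smul_psd Q b hb
  · have h1 := aux_smul_psd (P + (c / a) • Q) a ha
    have h2 := aux_smul_psd Q (b - Complex.normSq c / a) (by
      rw [sub_nonneg, div_le_iff₀ h]; linarith)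
    have h3 := h1.add h2
    convert h3 using 1
    have ha' : (a : ℂ) ≠ 0 := by exact_mod_cast h.ne'
    have e : ((Complex.normSq c : ℝ) : ℂ) = c * star c := (Complex.mul_conj c).symm
    simp only [Matrix.conjTranspose_add, Matrix.conjTranspose_smul, Matrix.add_mul, Matrix.mul_add,
      Matrix.smul_mul, Matrix.mul_smul]
    have e2 : star (c / (a : ℂ)) = star c / a := by simp
    rw [e2]
    push_cast
    rw [e]
    match_scalars <;> field_simp <;> ring

/-- For every integer `k ≥ 0` and every real vector `n` with `‖n‖₂ ≤ 1`, the matrix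
`((k+1)/2) I + n₁ J_x + n₂ J_y + n₃ J_z` of size `(k+2)×(k+2)` is Hermitian and
positive semidefinite. -/
theorem unruh_block_posSemidef (k : ℕ) (n₁ n₂ n₃ : ℝ)
    (hn : Real.sqrt (n₁ ^ 2 + n₂ ^ 2 + n₃ ^ 2) ≤ 1) :
    (((((k : ℝ) + 1) / 2 : ℝ) : ℂ) • (1 : Matrix (Fin (k + 2)) (Fin (k + 2)) ℂ) +
        (n₁ : ℂ) • Jx (k + 2) + (n₂ : ℂ) • Jy (k + 2) + (n₃ : ℂ) • Jz (k + 2)).IsHermitian ∧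
    (((((k : ℝ) + 1) / 2 : ℝ) : ℂ) • (1 : Matrix (Fin (k + 2)) (Fin (k + 2)) ℂ) +
        (n₁ : ℂ) • Jx (k + 2) + (n₂ : ℂ) • Jy (k + 2) + (n₃ : ℂ) • Jz (k + 2)).PosSemidef := by
  rw [and_iff_right_of_imp (fun h => h.isHermitian)]
  have hn' : n₁ ^ 2 + n₂ ^ 2 + n₃ ^ 2 ≤ 1 := by
    simpa using (Real.sqrt_le_left zero_le_one).mp hn
  have h3 : |n₃| ≤ 1 := by
    rw [← sq_le_one_iff_abs_le_one]; nlinarith [sq_nonneg n₁, sq_nonneg n₂]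
  obtain ⟨h3a, h3b⟩ := abs_le.mp h3
  have key := aux_psd (auxP k) (auxQ k) ((1 + n₃) / 2) ((1 - n₃) / 2) ⟨n₁ / 2, -n₂ / 2⟩
    (by linarith) (by linarith) (by rw [Complex.normSq_mk]; nlinarith)
  rw [auxPP, auxQQ, auxPQ, auxQP] at key
  convert key using 1
  have hc : (⟨n₁ / 2, -n₂ / 2⟩ : ℂ) = n₁ / 2 - Complex.I * n₂ / 2 := by
    apply Complex.ext <;> simp <;> ring
  have hc' : star (⟨n₁ / 2, -n₂ / 2⟩ : ℂ) = n₁ / 2 + Complex.I * n₂ / 2 := by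
    apply Complex.ext <;> simp <;> ring
  have hI : (1 / (2 * Complex.I) : ℂ) = - Complex.I / 2 := by
    rw [one_div, mul_inv, Complex.inv_I]; ring
  rw [hc', hc, Jx, Jy, hI, Jz]
  ext i j
  simp only [Matrix.add_apply, Matrix.sub_apply, Matrix.smul_apply, smul_eq_mul, Matrix.one_apply,
    Matrix.diagonal_apply]
  split_ifs <;> push_cast <;> ring
end

section
/- For every real z with 0 < z < 1, the following identity holds: ∑_{k=0}^∞ ∑_{m=1}^{k+1} ( −(1−z)³·z^k·m·ln((1−z)³·z^k·m) ) = −3·( z·ln z/(1−z) + ln(1−z) ) − (1−z)²·∑_{m=2}^∞ m·(ln m)·z^{m−1}. (The right-hand side equals −3[z ln z/(1−z) + ln(1−z)] + (1−z)²·(∂/∂z)(∂/∂s) Li_s(z)|_{s=0}, where Li_s(z) = ∑_{k≥1} z^k/k^s is the polylogarithm.) -/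
theorem aux_summable (z : ℝ) (hz0 : 0 < z) (hz1 : z < 1) :
    Summable (fun j : ℕ => ‖((j : ℝ) + 1) * Real.log ((j : ℝ) + 1) * z ^ j‖) := by
  have hn : ‖z‖ < 1 := by rw [Real.norm_eq_abs, abs_of_pos hz0]; exact hz1
  have h2 := (summable_pow_mul_geometric_of_norm_lt_one 2 hn)
  have h1 := (summable_pow_mul_geometric_of_norm_lt_one 1 hn)
  refine Summable.of_nonneg_of_le (fun _ => norm_nonneg _) (fun j => ?_) (h2.add h1)
  have hj : (0 : ℝ) ≤ j := Nat.cast_nonneg j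
  have hl0 : 0 ≤ Real.log ((j : ℝ) + 1) := Real.log_nonneg (by linarith)
  have hl1 : Real.log ((j : ℝ) + 1) ≤ j := by
    have := Real.log_le_sub_one_of_pos (show (0 : ℝ) < (j : ℝ) + 1 by linarith)
    linarith
  have hp : 0 < z ^ j := pow_pos hz0 j
  rw [Real.norm_eq_abs, abs_of_nonneg (by positivity)]
  calc ((j : ℝ) + 1) * Real.log ((j : ℝ) + 1) * z ^ j ≤ ((j : ℝ) + 1) * j * z ^ j := by gcongr
    _ = _ := by ring

theorem aux_conv (z : ℝ) (hz0 : 0 < z) (hz1 : z < 1) :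
    HasSum (fun k : ℕ => z ^ k * ∑ i ∈ Finset.range (k + 1), ((i : ℝ) + 1) * Real.log ((i : ℝ) + 1))
      ((∑' j : ℕ, ((j : ℝ) + 2) * Real.log ((j : ℝ) + 2) * z ^ (j + 1)) * (1 - z)⁻¹) := by
  have hn : ‖z‖ < 1 := by rw [Real.norm_eq_abs, abs_of_pos hz0]; exact hz1
  have hs := aux_summable z hz0 hz1
  have hg : Summable (fun j : ℕ => ‖z ^ j‖) := summable_norm_geometric_of_norm_lt_one hn
  have h1 := (summable_norm_sum_mul_range_of_summable_norm hs hg).of_norm.hasSum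
  rw [← tsum_mul_tsum_eq_tsum_sum_range_of_summable_norm hs hg, tsum_geometric_of_norm_lt_one hn,
    hs.of_norm.tsum_eq_zero_add] at h1
  convert h1 using 1
  · rfl
  · funext k
    rw [Finset.mul_sum]
    refine Finset.sum_congr rfl fun i hi => ?_
    have hik : i ≤ k := by simpa [Nat.lt_succ_iff] using hi
    rw [mul_assoc _ (z ^ i), ← pow_add, Nat.add_sub_cancel' hik]
    ring
  · congr 1
    have : ∀ j : ℕ, (((j + 1 : ℕ) : ℝ) + 1) = (j : ℝ) + 2 := by intro j; push_cast; ring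
    simp only [this]
    simp

theorem aux_c3 (z : ℝ) (hz0 : 0 < z) (hz1 : z < 1) :
    HasSum (fun k : ℕ => (k : ℝ) * ((k + 2).choose 2 : ℝ) * z ^ k) (3 * z / (1 - z) ^ 4) := by
  have hn : ‖z‖ < 1 := by rw [Real.norm_eq_abs, abs_of_pos hz0]; exact hz1
  have h := (hasSum_choose_mul_geometric_of_norm_lt_one 3 hn).mul_left (3 * z)
  rw [← hasSum_nat_add_iff' 1]
  convert h using 1
  · rfl
  · funext k
    have := Nat.add_one_mul_choose_eq (k + 2) 2
    have h3 : (k + 1) * (k + 1 + 2).choose 2 = (k + 3).choose 3 * 3 := by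
      have := Nat.choose_succ_right_eq (k + 3) 2
      rw [this]
      have e : k + 3 - 2 = k + 1 := by omega
      rw [e, mul_comm]
    have h4 : ((k : ℝ) + 1) * ((k + 1 + 2).choose 2 : ℝ) = ((k + 3).choose 3 : ℝ) * 3 := by
      exact_mod_cast h3
    push_cast
    rw [h4]; ring
  · simp
    ring

theorem aux_gauss (k : ℕ) :
    ∑ i ∈ Finset.range (k + 1), ((i : ℝ) + 1) = ((k + 2).choose 2 : ℝ) := by
  induction k with
  | zero => simp
  | succ n ih =>
    rw [Finset.sum_range_succ, ih, Nat.choose_succ_succ' (n + 2) 1]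
    push_cast
    simp
    ring

/-- For every `0 < z < 1`,
`∑_{k=0}^∞ ∑_{m=1}^{k+1} ( -(1-z)³ z^k m ln((1-z)³ z^k m) )
  = -3 (z ln z/(1-z) + ln(1-z)) - (1-z)² ∑_{m=2}^∞ m (ln m) z^{m-1}`,
the von Neumann entropy (in nats) of the Unruh channel output for a pure dual-rail
input state; the right-hand side equals
`-3[z ln z/(1-z) + ln(1-z)] + (1-z)² ∂_z ∂_s Li_s(z)|_{s=0}`. -/
theorem unruh_output_entropy_closed_form (z : ℝ) (hz0 : 0 < z) (hz1 : z < 1) :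
    ∑' k : ℕ, ∑ m ∈ Finset.Icc 1 (k + 1),
        (-((1 - z) ^ 3 * z ^ k * (m : ℝ) *
          Real.log ((1 - z) ^ 3 * z ^ k * (m : ℝ)))) =
      -3 * (z * Real.log z / (1 - z) + Real.log (1 - z)) -
        (1 - z) ^ 2 * ∑' j : ℕ, ((j : ℝ) + 2) * Real.log ((j : ℝ) + 2) * z ^ (j + 1) := by
  have hn : ‖z‖ < 1 := by rw [Real.norm_eq_abs, abs_of_pos hz0]; exact hz1
  have hw : 0 < 1 - z := by linarith
  have H := (((hasSum_choose_mul_geometric_of_norm_lt_one 2 hn).mul_left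
    (3 * Real.log (1 - z))).add ((aux_c3 z hz0 hz1).mul_left (Real.log z))).add
    (aux_conv z hz0 hz1)
  have H2 := H.mul_left (-(1 - z) ^ 3)
  have key : ∀ k : ℕ, ∑ m ∈ Finset.Icc 1 (k + 1),
        (-((1 - z) ^ 3 * z ^ k * (m : ℝ) *
          Real.log ((1 - z) ^ 3 * z ^ k * (m : ℝ)))) =
      -(1 - z) ^ 3 * (3 * Real.log (1 - z) * (((k + 2).choose 2 : ℝ) * z ^ k) +
        Real.log z * ((k : ℝ) * ((k + 2).choose 2 : ℝ) * z ^ k) +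
        z ^ k * ∑ i ∈ Finset.range (k + 1), ((i : ℝ) + 1) * Real.log ((i : ℝ) + 1)) := by
    intro k
    rw [← aux_gauss, ← Finset.Ico_add_one_right_eq_Icc, Finset.sum_Ico_eq_sum_range]
    simp only [Finset.mul_sum, Finset.sum_mul, ← Finset.sum_add_distrib]
    refine Finset.sum_congr (by simp) fun i _ => ?_
    have hi : (0 : ℝ) < (i : ℝ) + 1 := by positivity
    have e : ((1 + i : ℕ) : ℝ) = (i : ℝ) + 1 := by push_cast; ring
    rw [e, Real.log_mul (by positivity) hi.ne', Real.log_mul (by positivity) (by positivity),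
      Real.log_pow, Real.log_pow]
    push_cast
    ring
  rw [tsum_congr key, H2.tsum_eq]
  field_simp
  ring
end

section
/- For every real z with 0 < z < 1, the following identity holds: ∑_{k=0}^∞ ( −(k+2)·((1−z)³·z^k·(k+1)/2)·ln((1−z)³·z^k·(k+1)/2) ) = ln 2 − 3·ln(1−z) − 3·z·ln z/(1−z) − (1−z)³·∑_{k=0}^∞ ((k+1)(k+2)/2)·ln(k+1)·z^k, and in particular the family of summands on the left is summable. -/
/-- For every `0 < z < 1`, the von Neumann entropy (in nats) of the Unruh channel output
for the maximally mixed dual-rail input, whose eigenvalues are `(1-z)³ z^k (k+1)/2` with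
multiplicity `k+2`, satisfies
`∑_{k=0}^∞ ( -(k+2) ((1-z)³ z^k (k+1)/2) ln((1-z)³ z^k (k+1)/2) )
  = ln 2 - 3 ln(1-z) - 3 z ln z/(1-z) - (1-z)³ ∑_{k=0}^∞ ((k+1)(k+2)/2) ln(k+1) z^k`,
and in particular the family of summands on the left is summable. -/
theorem unruh_maximally_mixed_entropy (z : ℝ) (hz0 : 0 < z) (hz1 : z < 1) :
    Summable (fun k : ℕ =>
      -(((k : ℝ) + 2) * ((1 - z) ^ 3 * z ^ k * ((k : ℝ) + 1) / 2) *
        Real.log ((1 - z) ^ 3 * z ^ k * ((k : ℝ) + 1) / 2))) ∧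
    ∑' k : ℕ,
        (-(((k : ℝ) + 2) * ((1 - z) ^ 3 * z ^ k * ((k : ℝ) + 1) / 2) *
          Real.log ((1 - z) ^ 3 * z ^ k * ((k : ℝ) + 1) / 2))) =
      Real.log 2 - 3 * Real.log (1 - z) - 3 * z * Real.log z / (1 - z) -
        (1 - z) ^ 3 *
          ∑' k : ℕ, (((k : ℝ) + 1) * ((k : ℝ) + 2) / 2) * Real.log ((k : ℝ) + 1) * z ^ k := by
  have hz : ‖z‖ < 1 := by rw [Real.norm_of_nonneg hz0.le]; exact hz1
  have hw : (0:ℝ) < 1 - z := by linarith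
  have c2 : ∀ n : ℕ, (((n + 2).choose 2 : ℕ) : ℝ) = ((n:ℝ) + 1) * (n + 2) / 2 := by
    intro n
    rw [Nat.cast_choose_two]
    push_cast
    ring
  have c3 : ∀ n : ℕ, (((n + 3).choose 3 : ℕ) : ℝ) = ((n:ℝ) + 1) * (n + 2) * (n + 3) / 6 := by
    intro n
    have h := Nat.add_one_mul_choose_eq (n + 2) 2
    have h' : ((n:ℝ) + 2 + 1) * (((n + 2).choose 2 : ℕ) : ℝ)
        = (((n + 3).choose 3 : ℕ) : ℝ) * (2 + 1) := by exact_mod_cast h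
    rw [c2] at h'
    linarith
  have A : HasSum (fun k : ℕ => (((k : ℝ) + 1) * ((k : ℝ) + 2) / 2) * z ^ k)
      (1 / (1 - z) ^ 3) := by
    have h := hasSum_choose_mul_geometric_of_norm_lt_one 2 hz
    simpa only [c2] using h
  have B : HasSum (fun k : ℕ => (k : ℝ) * ((((k : ℝ) + 1) * ((k : ℝ) + 2) / 2) * z ^ k))
      (3 * (1 / (1 - z) ^ 4) - 3 * (1 / (1 - z) ^ 3)) := by
    have h := hasSum_choose_mul_geometric_of_norm_lt_one 3 hz
    simp only [c3] at h
    have h2 := (h.mul_left 3).sub (A.mul_left 3)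
    convert! h2 using 1
    funext k
    ring
  have C : Summable (fun k : ℕ =>
      (((k : ℝ) + 1) * ((k : ℝ) + 2) / 2) * Real.log ((k : ℝ) + 1) * z ^ k) := by
    refine Summable.of_nonneg_of_le ?_ ?_ B.summable
    · intro k
      have : 0 ≤ Real.log ((k : ℝ) + 1) := Real.log_nonneg (by linarith [k.cast_nonneg (α := ℝ)])
      positivity
    · intro k
      have h1 : Real.log ((k : ℝ) + 1) ≤ k := by
        have := Real.log_le_sub_one_of_pos (show (0:ℝ) < (k : ℝ) + 1 by positivity)
        linarith
      have h2 : 0 ≤ (((k : ℝ) + 1) * ((k : ℝ) + 2) / 2) * z ^ k := by positivity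
      nlinarith [mul_le_mul_of_nonneg_right h1 h2]
  have D := ((A.mul_left ((1 - z) ^ 3 * (Real.log 2 - 3 * Real.log (1 - z)))).sub
    (B.mul_left ((1 - z) ^ 3 * Real.log z))).sub (C.hasSum.mul_left ((1 - z) ^ 3))
  have E : ∀ k : ℕ, Real.log ((1 - z) ^ 3 * z ^ k * ((k : ℝ) + 1) / 2)
      = 3 * Real.log (1 - z) + k * Real.log z + Real.log ((k : ℝ) + 1) - Real.log 2 := by
    intro k
    have : (k : ℝ) + 1 ≠ 0 := by positivity
    rw [Real.log_div (by positivity) (by norm_num), Real.log_mul (by positivity) this,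
      Real.log_mul (by positivity) (by positivity), Real.log_pow, Real.log_pow]
    norm_num
  have F : HasSum (fun k : ℕ =>
      -(((k : ℝ) + 2) * ((1 - z) ^ 3 * z ^ k * ((k : ℝ) + 1) / 2) *
        Real.log ((1 - z) ^ 3 * z ^ k * ((k : ℝ) + 1) / 2)))
      (Real.log 2 - 3 * Real.log (1 - z) - 3 * z * Real.log z / (1 - z) -
        (1 - z) ^ 3 *
          ∑' k : ℕ, (((k : ℝ) + 1) * ((k : ℝ) + 2) / 2) * Real.log ((k : ℝ) + 1) * z ^ k) := by
    convert! D using 1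
    · funext k
      rw [E]
      ring
    · congr 1
      have := hw.ne'
      field_simp
      ring
  exact ⟨F.summable, F.tsum_eq⟩
end

section
/- For every real z with 0 < z < 1, one has (1−z)³·∑_{k=0}^∞ (k+1)(k+2)·ln((k+2)/(k+1))·z^k < 2·ln 2, while at z = 0 the left-hand side equals 2·ln 2. Consequently the quantity Q_p = (1/2)·(1 − ((1−z)³/(4·ln 2))·∑_{k=0}^∞ (k+1)(k+2)·ln((k+2)/(k+1))·z^k·2) is strictly positive for all z ∈ (0,1) and equals 0 at z = 0. -/
theorem aux_lt (z : ℝ) (h0 : 0 < z) (h1 : z < 1) :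
    (1 - z) ^ 3 * (∑' k : ℕ, ((k : ℝ) + 1) * ((k : ℝ) + 2) *
          Real.log (((k : ℝ) + 2) / ((k : ℝ) + 1)) * z ^ k) < 2 * Real.log 2 := by
  have hz : ‖z‖ < 1 := by rw [Real.norm_eq_abs, abs_of_pos h0]; exact h1
  have hs := (hasSum_choose_mul_geometric_of_norm_lt_one 2 hz).mul_left (2 * Real.log 2)
  have hl2 : 0 < Real.log 2 := Real.log_pos (by norm_num)
  have hch : ∀ k : ℕ, 2 * Real.log 2 * (((k + 2).choose 2 : ℕ) * z ^ k)
      = ((k : ℝ) + 1) * ((k : ℝ) + 2) * Real.log 2 * z ^ k := by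
    intro k
    rw [Nat.cast_choose_two]
    push_cast
    ring
  simp only [hch] at hs
  have hq : ∀ k : ℕ, ((k : ℝ) + 2) / ((k : ℝ) + 1) ≤ 2 := by
    intro k
    rw [div_le_iff₀ (by positivity)]
    have : (0 : ℝ) ≤ k := Nat.cast_nonneg k
    linarith
  have hle : ∀ k : ℕ, ((k : ℝ) + 1) * ((k : ℝ) + 2) *
      Real.log (((k : ℝ) + 2) / ((k : ℝ) + 1)) * z ^ k ≤
      ((k : ℝ) + 1) * ((k : ℝ) + 2) * Real.log 2 * z ^ k := by
    intro k
    have := Real.log_le_log (by positivity) (hq k)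
    gcongr
  have hnn : ∀ k : ℕ, 0 ≤ ((k : ℝ) + 1) * ((k : ℝ) + 2) *
      Real.log (((k : ℝ) + 2) / ((k : ℝ) + 1)) * z ^ k := by
    intro k
    have : 0 ≤ Real.log (((k : ℝ) + 2) / ((k : ℝ) + 1)) := by
      apply Real.log_nonneg
      rw [le_div_iff₀ (by positivity)]
      linarith
    positivity
  have hsum := Summable.of_nonneg_of_le hnn hle hs.summable
  have hlt := hsum.tsum_lt_tsum (i := 1) hle (by
    have : Real.log ((((1 : ℕ) : ℝ) + 2) / (((1 : ℕ) : ℝ) + 1)) < Real.log 2 :=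
      Real.log_lt_log (by positivity) (by norm_num)
    gcongr) hs.summable
  rw [hs.tsum_eq] at hlt
  have hp : 0 < (1 - z) ^ 3 := pow_pos (by linarith) 3
  calc _ < (1 - z) ^ 3 * (2 * Real.log 2 * (1 / (1 - z) ^ (2 + 1))) :=
        mul_lt_mul_of_pos_left hlt hp
    _ = 2 * Real.log 2 := by
        have hz1 : 1 - z ≠ 0 := sub_ne_zero.mpr h1.ne'
        norm_num only
        field_simp

theorem aux_zero :
    (∑' k : ℕ, ((k : ℝ) + 1) * ((k : ℝ) + 2) *
        Real.log (((k : ℝ) + 2) / ((k : ℝ) + 1)) * (0 : ℝ) ^ k) = 2 * Real.log 2 := by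
  rw [tsum_eq_single 0]
  · norm_num
  · intro k hk
    simp [hk]

/-- For every `0 < z < 1`, `(1-z)³ ∑_{k=0}^∞ (k+1)(k+2) ln((k+2)/(k+1)) z^k < 2 ln 2`,
while at `z = 0` the left-hand side equals `2 ln 2`. Consequently the private quantum
capacity `Q_p = (1/2)(1 - ((1-z)³/(4 ln 2)) ∑_{k=0}^∞ (k+1)(k+2) ln((k+2)/(k+1)) z^k · 2)`
is strictly positive for all `z ∈ (0,1)` and equals `0` at `z = 0`. -/
theorem private_quantum_capacity_positive :
    (∀ z : ℝ, 0 < z → z < 1 →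
      (1 - z) ^ 3 * (∑' k : ℕ, ((k : ℝ) + 1) * ((k : ℝ) + 2) *
          Real.log (((k : ℝ) + 2) / ((k : ℝ) + 1)) * z ^ k) < 2 * Real.log 2) ∧
    (1 - (0 : ℝ)) ^ 3 * (∑' k : ℕ, ((k : ℝ) + 1) * ((k : ℝ) + 2) *
        Real.log (((k : ℝ) + 2) / ((k : ℝ) + 1)) * (0 : ℝ) ^ k) = 2 * Real.log 2 ∧
    (∀ z : ℝ, 0 < z → z < 1 →
      0 < (1 / 2 : ℝ) * (1 - ((1 - z) ^ 3 / (4 * Real.log 2)) *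
        (∑' k : ℕ, ((k : ℝ) + 1) * ((k : ℝ) + 2) *
          Real.log (((k : ℝ) + 2) / ((k : ℝ) + 1)) * z ^ k) * 2)) ∧
    (1 / 2 : ℝ) * (1 - ((1 - (0 : ℝ)) ^ 3 / (4 * Real.log 2)) *
        (∑' k : ℕ, ((k : ℝ) + 1) * ((k : ℝ) + 2) *
          Real.log (((k : ℝ) + 2) / ((k : ℝ) + 1)) * (0 : ℝ) ^ k) * 2) = 0 := by
  have hl2 : 0 < Real.log 2 := Real.log_pos (by norm_num)
  refine ⟨aux_lt, ?_, ?_, ?_⟩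
  · rw [aux_zero]; ring
  · intro z h0 h1
    have h := aux_lt z h0 h1
    generalize (∑' k : ℕ, ((k : ℝ) + 1) * ((k : ℝ) + 2) *
          Real.log (((k : ℝ) + 2) / ((k : ℝ) + 1)) * z ^ k) = S at h ⊢
    have e : (1 - z) ^ 3 / (4 * Real.log 2) * S * 2
        = ((1 - z) ^ 3 * S) / (2 * Real.log 2) := by
      field_simp
      ring
    have : ((1 - z) ^ 3 * S) / (2 * Real.log 2) < 1 := by
      rw [div_lt_one (by positivity)]
      exact h
    rw [e]
    linarith
  · rw [aux_zero]
    field_simp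
    norm_num
end
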